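/- Let n ≥ 1 and let T be an n-periodic 2-triangulation on ℤ. Consider the set of 2-stars all five of whose edges lie in T. This set is invariant under translation by n (a 2-star with vertices z₀<⋯<z₄ translates to the 2-star with vertices z₀+n<⋯<z₄+n), and the number of its orbits under translation by n is exactly n−1. -/

import Mathlib

/- Edges on the universal cover of the half-cylinder, modeled by the integers.
   An edge is an unordered pair of distinct integers, represented as an ordered
   pair `(a, b)` with `a < b` (validity). -/

namespace Multitriangulation

abbrev Edge := ℤ × ℤ

/-- Translate an edge by `t`: `[a,b] + t = [a+t, b+t]`. -/
def shift (e : Edge) (t : ℤ) : Edge := (e.1 + t, e.2 + t)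

/-- Two edges (as unordered pairs of integers) cross:
their endpoints strictly interleave. -/
def Crosses (e f : Edge) : Prop :=
  (min e.1 e.2 < min f.1 f.2 ∧ min f.1 f.2 < max e.1 e.2 ∧ max e.1 e.2 < max f.1 f.2) ∨
  (min f.1 f.2 < min e.1 e.2 ∧ min e.1 e.2 < max f.1 f.2 ∧ max f.1 f.2 < max e.1 e.2)

/-- A finite set of edges is an `l`-crossing if it consists of `l` pairwise
crossing edges. -/
def IsCrossing (l : ℕ) (S : Finset Edge) : Prop :=
  S.card = l ∧ ∀ e ∈ S, ∀ f ∈ S, e ≠ f → Crosses e f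

/-- A set of edges is `l`-crossing-free if no `l` of its edges pairwise cross. -/
def CrossingFree (l : ℕ) (E : Set Edge) : Prop :=
  ¬ ∃ S : Finset Edge, ↑S ⊆ E ∧ IsCrossing l S

/-- A set of edges is `n`-periodic if `e ∈ E ↔ e + n ∈ E`. -/
def Periodic (n : ℕ) (E : Set Edge) : Prop := ∀ e, e ∈ E ↔ shift e (n : ℤ) ∈ E

/-- All members are genuine edges `[a,b]` with `a < b`. -/
def ValidEdges (E : Set Edge) : Prop := ∀ e ∈ E, e.1 < e.2

/-- An `n`-periodic `k`-triangulation on `ℤ`: an `n`-periodic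
`(k+1)`-crossing-free set of edges that is maximal under inclusion among
`n`-periodic `(k+1)`-crossing-free sets of edges. -/
def IsTriangulation (n k : ℕ) (T : Set Edge) : Prop :=
  ValidEdges T ∧ Periodic n T ∧ CrossingFree (k+1) T ∧
  ∀ T', ValidEdges T' → Periodic n T' → CrossingFree (k+1) T' → T ⊆ T' → T' = T

/-- The cyclic order relation on integers: `cyc a b c` iff
`a<b<c` or `b<c<a` or `c<a<b`. -/
def cyc (a b c : ℤ) : Prop := (a < b ∧ b < c) ∨ (b < c ∧ c < a) ∨ (c < a ∧ a < b)

/-- Membership of the unordered edge `[a,b]` in an edge set. -/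
def EdgeMem (T : Set Edge) (a b : ℤ) : Prop := (a, b) ∈ T ∨ (b, a) ∈ T

/-- `∠(u,v,w)` is an angle of `T`: the edges `[u,v],[v,w]` lie in `T`,
`cyc u v w`, and `T` has no edge `[v,w₀]` with `w₀ ≺ u ≺ v ≺ w` in cyclic
order. -/
def IsAngle (T : Set Edge) (u v w : ℤ) : Prop :=
  EdgeMem T u v ∧ EdgeMem T v w ∧ cyc u v w ∧
  ¬ ∃ w₀ : ℤ, EdgeMem T v w₀ ∧ cyc w₀ u v ∧ cyc w₀ v w

/-- The set of 2-stars all five of whose edges lie in `T`: a 2-star is given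
by strictly increasing vertices `z 0 < ⋯ < z 4` with edges `[z i, z (i+2)]`
(indices mod 5). -/
def StarsIn (T : Set Edge) : Set (Fin 5 → ℤ) :=
  {z | StrictMono z ∧ ∀ i : Fin 5, EdgeMem T (z i) (z (i + 2))}

/-- The orbit of a 2-star under translation by multiples of `n`. -/
def starOrbit (n : ℕ) (z : Fin 5 → ℤ) : Set (Fin 5 → ℤ) :=
  {w | ∃ t : ℤ, w = fun i => z i + t * n}


/-- Abstract form of an `N`-periodic 2-triangulation. -/
structure Sys (N : ℤ) (M : ℤ → ℤ → Prop) : Prop where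
  pos : 0 < N
  lt : ∀ a b, M a b → a < b
  per : ∀ a b t, M a b → M (a + t * N) (b + t * N)
  nc : ∀ a1 b1 a2 b2 a3 b3, M a1 b1 → M a2 b2 → M a3 b3 →
    ¬ (a1 < a2 ∧ a2 < a3 ∧ a3 < b1 ∧ b1 < b2 ∧ b2 < b3)
  max : ∀ a b, a < b →
    (∀ a1 b1 a2 b2 a3 b3,
      (M a1 b1 ∨ ∃ t, a1 = a + t * N ∧ b1 = b + t * N) →
      (M a2 b2 ∨ ∃ t, a2 = a + t * N ∧ b2 = b + t * N) →
      (M a3 b3 ∨ ∃ t, a3 = a + t * N ∧ b3 = b + t * N) →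
      ¬ (a1 < a2 ∧ a2 < a3 ∧ a3 < b1 ∧ b1 < b2 ∧ b2 < b3)) → M a b

namespace Sys

variable {N : ℤ} {M : ℤ → ℤ → Prop}

/-- Reflection. -/
lemma refl' (S : Sys N M) : Sys N (fun x y => M (-y) (-x)) where
  pos := S.pos
  lt := fun a b h => by have := S.lt _ _ h; omega
  per := fun a b t h => by
    have := S.per _ _ (-t) h
    have e1 : -(b + t * N) = -b + -t * N := by ring
    have e2 : -(a + t * N) = -a + -t * N := by ring
    rw [e1, e2]; exact this
  nc := fun a1 b1 a2 b2 a3 b3 h1 h2 h3 h => by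
    have := S.nc _ _ _ _ _ _ h3 h2 h1
    omega
  max := fun a b hab h => by
    apply S.max _ _ (by omega)
    intro a1 b1 a2 b2 a3 b3 h1 h2 h3 hh
    have key : ∀ x y, (M x y ∨ ∃ t, x = -b + t * N ∧ y = -a + t * N) →
        (M (- -x) (- -y) ∨ ∃ t, -y = a + t * N ∧ -x = b + t * N) := by
      rintro x y (h | ⟨t, rfl, rfl⟩)
      · left; simpa using h
      · right; exact ⟨-t, by ring, by ring⟩
    exact h (-b3) (-a3) (-b2) (-a2) (-b1) (-a1) (key _ _ h3) (key _ _ h2) (key _ _ h1) (by omega)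

lemma sh (S : Sys N M) {a b : ℤ} (h : M a b) (t : ℤ) {x y : ℤ}
    (hx : x = a + t * N) (hy : y = b + t * N) : M x y := by
  subst hx hy; exact S.per _ _ _ h

lemma len (S : Sys N M) {a b : ℤ} (h : M a b) : b - a ≤ 2 * N := by
  have := S.nc _ _ _ _ _ _ h (S.per _ _ 1 h) (S.per _ _ 2 h)
  have := S.pos
  omega

lemma max' (S : Sys N M) {a b : ℤ} (hab : a < b) (hl : b - a ≤ 2 * N)
    (h1 : ∀ x y x' y', M x y → M x' y' → x < x' → x' < y → y < y' →
      ¬ (a < x ∧ x' < b ∧ b < y) ∧ ¬ (x < a ∧ a < x' ∧ y < b ∧ x' < y ∧ b < y') ∧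
      ¬ (x' < a ∧ a < y ∧ y' < b))
    (h2 : ∀ x y, M x y →
      ¬ (a < x ∧ x < a + N ∧ a + N < b ∧ b < y ∧ y < b + N) ∧
      ¬ (x < a ∧ a + N < y ∧ y < b) ∧ ¬ (a + N < x ∧ x < b ∧ b + N < y)) : M a b := by
  have hN := S.pos
  have two : ∀ t s : ℤ, a + t * N < a + s * N → a + s * N < b + t * N → s = t + 1 := by
    intro t s h h'
    have h3 : t < s := by
      by_contra hc
      nlinarith
    have h4 : s < t + 2 := by
      by_contra hc
      nlinarith
    omega
  apply S.max _ _ hab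
  rintro a1 b1 a2 b2 a3 b3 (m1 | ⟨t1, rfl, rfl⟩) (m2 | ⟨t2, rfl, rfl⟩) (m3 | ⟨t3, rfl, rfl⟩) hh
  · exact S.nc _ _ _ _ _ _ m1 m2 m3 hh
  · have := h1 _ _ _ _ (S.per _ _ (-t3) m1) (S.per _ _ (-t3) m2)
    simp only [neg_mul] at this
    omega
  · have := h1 _ _ _ _ (S.per _ _ (-t2) m1) (S.per _ _ (-t2) m3)
    simp only [neg_mul] at this
    omega
  · have e := two t2 t3 (by omega) (by omega)
    subst e
    have := h2 _ _ (S.per _ _ (-t2) m1)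
    simp only [neg_mul, add_mul] at this hh
    omega
  · have := h1 _ _ _ _ (S.per _ _ (-t1) m2) (S.per _ _ (-t1) m3)
    simp only [neg_mul] at this
    omega
  · have e := two t1 t3 (by omega) (by omega)
    subst e
    have := h2 _ _ (S.per _ _ (-t1) m2)
    simp only [neg_mul, add_mul] at this hh
    omega
  · have e := two t1 t2 (by omega) (by omega)
    subst e
    have := h2 _ _ (S.per _ _ (-t1) m3)
    simp only [neg_mul, add_mul] at this hh
    omega
  · have e := two t1 t2 (by omega) (by omega)
    have e := two t2 t3 (by omega) (by omega)
    have e := two t1 t3 (by omega) (by omega)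
    omega

lemma two_mem (S : Sys N M) (v : ℤ) : M v (v + 2) := by
  apply S.max' (by omega) (by have := S.pos; omega)
  · intro x y x' y' _ _ _ _ _
    omega
  · intro x y _
    have := S.pos
    omega

/-- Some vertex is not covered by two crossing edges. -/
lemma exists_top (S : Sys N M) : ∃ v : ℤ, ∀ a c b d, M a c → M b d →
    ¬ (a < b ∧ b < v ∧ v < c ∧ c < d) := by
  by_contra hcon
  push Not at hcon
  -- a crossing pair with longest core
  have hmax : ∃ k : ℤ, (∃ a b c d, M a c ∧ M b d ∧ a < b ∧ b < c ∧ c < d ∧ c - b = k) ∧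
      ∀ k' : ℤ, (∃ a b c d, M a c ∧ M b d ∧ a < b ∧ b < c ∧ c < d ∧ c - b = k') → k' ≤ k := by
    apply Int.exists_greatest_of_bdd
    · refine ⟨2 * N, ?_⟩
      rintro z ⟨a, b, c, d, h1, h2, _, _, _, rfl⟩
      have := S.len h1
      omega
    · obtain ⟨a, c, b, d, h1, h2, _, _, _, _⟩ := hcon 0
      exact ⟨c - b, a, b, c, d, h1, h2, by omega, by omega, by omega, rfl⟩
  obtain ⟨k, ⟨a, b, c, d, hf, hg, hab, hbc, hcd, hk⟩, hm⟩ := hmax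
  obtain ⟨a', c', b', d', hf', hg', h1, h2, h3, h4⟩ := hcon c
  have e1 := hm _ ⟨a', b', c', d', hf', hg', h1, by omega, h4, rfl⟩
  have n1 := S.nc _ _ _ _ _ _ hf hg hg'
  have n2 := S.nc _ _ _ _ _ _ hf hf' hg'
  have e2 := hm _ ⟨a', b, c', d, hf', hg, by omega, by omega, by omega, rfl⟩
  omega

lemma exists_long (S : Sys N M) : ∃ p : ℤ, M p (p + 2 * N) := by
  obtain ⟨p, hp⟩ := S.exists_top
  have hN := S.pos
  refine ⟨p, S.max' (by omega) (by omega) ?_ ?_⟩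
  · intro x y x' y' hf hg h1 h2 h3
    have l1 := S.len hf
    have l2 := S.len hg
    have c1 := hp _ _ _ _ hf hg
    have c2 := hp _ _ _ _ (S.per _ _ (-2) hf) (S.per _ _ (-2) hg)
    have c3 := hp _ _ _ _ (S.per _ _ (-2) hg) hf
    have c4 := hp _ _ _ _ hf (S.per _ _ (-2) hg)
    omega
  · intro x y hf
    have l1 := S.len hf
    have c0 := hp _ _ _ _ hf (S.per _ _ 1 hf)
    have c1 := hp _ _ _ _ (S.per _ _ (-1) hf) hf
    have c2 := hp _ _ _ _ (S.per _ _ (-2) hf) (S.per _ _ (-1) hf)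
    have c3 := hp _ _ _ _ (S.per _ _ (-3) hf) (S.per _ _ (-2) hf)
    omega

lemma bound (S : Sys N M) {p : ℤ} (hp : M p (p + 2 * N)) {x y : ℤ} (h : M x y)
    (h1 : p ≤ x) (h2 : x < p + N) : y ≤ p + 2 * N := by
  have l := S.len h
  have := S.nc _ _ _ _ _ _ hp h (S.per _ _ 1 hp)
  omega

lemma bound1 (S : Sys N M) {p : ℤ} (hp : M p (p + 2 * N)) {x y : ℤ} (h : M x y)
    (h1 : p - N ≤ x) (h2 : x < p) : y ≤ p + N := by
  have := S.bound hp (S.per _ _ 1 h) (by omega) (by omega)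
  omega

lemma bound2 (S : Sys N M) {p : ℤ} (hp : M p (p + 2 * N)) {x y : ℤ} (h : M x y)
    (h2 : x < p - N) : y ≤ p := by
  have l := S.len h
  by_cases hx : p - 2 * N ≤ x
  · have := S.bound hp (S.per _ _ 2 h) (by omega) (by omega)
    omega
  · omega

/-- Data around a vertex `v`: extreme neighbours and the outermost edge above `v` between them. -/
structure Ang (M : ℤ → ℤ → Prop) (u a v b w : ℤ) : Prop where
  uv : M u v
  vw : M v w
  ab : M a b
  ua : u < a
  av : a < v
  vb : v < b
  bw : b < w
  umin : ∀ x, M x v → u ≤ x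
  wmax : ∀ x, M v x → x ≤ w
  out : ∀ c d, M c d → u < c → c < v → v < d → d < w → a ≤ c ∧ d ≤ b

lemma exists_ang (S : Sys N M) (v : ℤ) : ∃ u a b w, Ang M u a v b w := by
  obtain ⟨u, hu, hu'⟩ : ∃ u, M u v ∧ ∀ x, M x v → u ≤ x := by
    apply Int.exists_least_of_bdd
    · exact ⟨v - 2 * N, fun z hz => by have := S.len hz; omega⟩
    · exact ⟨v - 2, by simpa using S.two_mem (v - 2)⟩
  obtain ⟨w, hw, hw'⟩ : ∃ w, M v w ∧ ∀ x, M v x → x ≤ w := by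
    apply Int.exists_greatest_of_bdd
    · exact ⟨v + 2 * N, fun z hz => by have := S.len hz; omega⟩
    · exact ⟨v + 2, S.two_mem v⟩
  have u2 := hu' (v - 2) (by simpa using S.two_mem (v - 2))
  have w2 := hw' _ (S.two_mem v)
  obtain ⟨k, ⟨a, b, hab, h1, h2, h3, h4, hk⟩, hm⟩ :
      ∃ k : ℤ, (∃ a b, M a b ∧ u < a ∧ a < v ∧ v < b ∧ b < w ∧ b - a = k) ∧
        ∀ k' : ℤ, (∃ a b, M a b ∧ u < a ∧ a < v ∧ v < b ∧ b < w ∧ b - a = k') → k' ≤ k := by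
    apply Int.exists_greatest_of_bdd
    · refine ⟨2 * N, ?_⟩
      rintro z ⟨a, b, h1, _, _, _, _, rfl⟩
      exact S.len h1
    · refine ⟨2, v - 1, v + 1, ?_, by omega, by omega, by omega, by omega, by omega⟩
      have := S.two_mem (v - 1)
      rwa [show v - 1 + 2 = v + 1 by ring] at this
  refine ⟨u, a, b, w, hu, hw, hab, h1, h2, h3, h4, hu', hw', ?_⟩
  intro c d hcd g1 g2 g3 g4
  have := hm _ ⟨c, d, hcd, g1, g2, g3, g4, rfl⟩
  have := S.nc _ _ _ _ _ _ hab hcd hw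
  have := S.nc _ _ _ _ _ _ hcd hab hw
  omega

lemma left_mem (S : Sys N M) {p : ℤ} (hp : M p (p + 2 * N)) {u a v b w : ℤ}
    (A : Ang M u a v b w) (h1 : p < v) (h2 : v < p + N) : M u b := by
  have hN := S.pos
  obtain ⟨uv, vw, ab, ua, av, vb, bw, umin, wmax, out⟩ := A
  have q1 := S.per _ _ 1 hp
  have hu : p - N ≤ u := by
    by_contra hc
    have := S.bound2 hp uv (by omega)
    omega
  have hw : w ≤ p + 2 * N := S.bound hp vw (by omega) (by omega)
  have n0 := S.nc _ _ _ _ _ _ ab vw q1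
  have hb : b ≤ p + N := by omega
  have H : ∀ x y x' y', M x y → M x' y' → x < x' → x' < y → y < y' →
      ¬ (u < x ∧ x' < b ∧ b < y) ∧ ¬ (x < u ∧ u < x' ∧ y < b ∧ x' < y ∧ b < y') ∧
      ¬ (x' < u ∧ u < y ∧ y' < b) := by
    intro x y x' y' hf hg g1 g2 g3
    refine ⟨?_, ?_, ?_⟩
    · rintro ⟨k1, k2, k3⟩
      have o1 := out _ _ hf
      have m1 := wmax y'
      have c1 := S.nc _ _ _ _ _ _ uv hf hg
      have c2 := S.nc _ _ _ _ _ _ ab hf hg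
      have c3 := S.nc _ _ _ _ _ _ ab vw hg
      have c4 := S.nc _ _ _ _ _ _ hf vw hg
      by_cases hv : x' = v
      · subst hv
        have := m1 hg
        omega
      · omega
    · rintro ⟨k1, k2, k3, k4, k5⟩
      have o1 := out _ _ hg
      have m1 := umin x
      have c1 := S.nc _ _ _ _ _ _ hf uv hg
      have c2 := S.nc _ _ _ _ _ _ hf ab hg
      have c3 := S.nc _ _ _ _ _ _ hf ab vw
      have c4 := S.nc _ _ _ _ _ _ hf vw hg
      have c5 := S.nc _ _ _ _ _ _ hf hg vw
      by_cases hv : y = v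
      · subst hv
        have := m1 hf
        omega
      · omega
    · rintro ⟨k1, k2, k3⟩
      have m1 := umin x
      have m2 := umin x'
      have c1 := S.nc _ _ _ _ _ _ hf hg uv
      have c2 := S.nc _ _ _ _ _ _ hf hg ab
      have c3 := S.nc _ _ _ _ _ _ hf hg vw
      have c5 := S.nc _ _ _ _ _ _ hg ab vw
      have c6 := S.nc _ _ _ _ _ _ hf ab vw
      by_cases hv : y = v
      · subst hv
        have := m1 hf
        omega
      · by_cases hv' : y' = v
        · subst hv'
          have := m2 hg
          omega
        · omega
  apply S.max' (by omega) (by omega) H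
  intro x y hf
  have q0 := S.per _ _ (-1) hp
  have b1 := S.bound hp hf
  have b2 := S.bound1 hp hf
  have b3 := S.bound2 hp hf
  have lf := S.len hf
  have uv1 := S.per _ _ 1 uv
  refine ⟨?_, ?_, ?_⟩
  · rintro ⟨k1, k2, k3, k4, k5⟩
    have o1 := out _ _ hf
    have hy : y ≤ p + N := by
      by_cases hx : x < p
      · exact b2 (by omega) hx
      · by_contra hyc
        have H5 := (H _ _ _ _ (S.per _ _ (-1) hf) hp (by omega) (by omega) (by omega)).2.1
        omega
    clear H b1 b2 b3
    have c1 := S.nc _ _ _ _ _ _ ab hf vw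
    have c2 := S.nc _ _ _ _ _ _ uv hf uv1
    have c3 := S.nc _ _ _ _ _ _ ab vw uv1
    have c4 := S.nc _ _ _ _ _ _ ab hf uv1
    by_cases hv : v = u + N
    · have := wmax (v + N) (S.sh uv 1 (by omega) (by omega))
      omega
    · omega
  · rintro ⟨k1, k2, k3⟩
    have H1 := H _ _ _ _ hf hp
    omega
  · rintro ⟨k1, k2, k3⟩
    have H1 := H _ _ _ _ hf hp
    have H2 := H _ _ _ _ hp hf
    have H3 := H _ _ _ _ (S.per _ _ (-1) hf) hp
    have H4 := H _ _ _ _ hp (S.per _ _ (-1) hf)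
    omega


lemma star_exists (S : Sys N M) {p : ℤ} (hp : M p (p + 2 * N)) {v : ℤ}
    (h1 : p < v) (h2 : v < p + N) : ∃ u a b w, u < a ∧ a < v ∧ v < b ∧ b < w ∧
      M u v ∧ M a b ∧ M v w ∧ M u b ∧ M a w := by
  obtain ⟨u, a, b, w, A⟩ := S.exists_ang v
  refine ⟨u, a, b, w, A.ua, A.av, A.vb, A.bw, A.uv, A.ab, A.vw, S.left_mem hp A h1 h2, ?_⟩
  have A' : Ang (fun x y => M (-y) (-x)) (-w) (-b) (-v) (-a) (-u) := by
    obtain ⟨uv, vw, ab, ua, av, vb, bw, umin, wmax, out⟩ := A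
    refine ⟨by simpa using vw, by simpa using uv, by simpa using ab, by omega, by omega,
      by omega, by omega, ?_, ?_, ?_⟩
    · intro x hx
      have := wmax (-x) (by simpa using hx)
      omega
    · intro x hx
      have := umin (-x) (by simpa using hx)
      omega
    · intro c d hcd _ _ _ _
      have := out (-d) (-c) hcd (by omega) (by omega) (by omega) (by omega)
      omega
  have := S.refl'.left_mem (p := -p - N)
    (S.sh hp (-1) (by ring) (by ring)) A' (by omega) (by omega)
  simpa using this

/-- A 2-star. -/
structure Star (M : ℤ → ℤ → Prop) (u a v b w : ℤ) : Prop where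
  ua : u < a
  av : a < v
  vb : v < b
  bw : b < w
  uv : M u v
  ab : M a b
  vw : M v w
  ub : M u b
  aw : M a w

lemma star_le (S : Sys N M) {u a v b w u' a' b' w' : ℤ} (A : Star M u a v b w)
    (B : Star M u' a' v b' w') : u ≤ u' ∧ w' ≤ w := by
  obtain ⟨ua, av, vb, bw, uv, ab, vw, ub, aw⟩ := A
  obtain ⟨ua', av', vb', bw', uv', ab', vw', ub', aw'⟩ := B
  have := S.nc _ _ _ _ _ _ uv' ub aw
  have := S.nc _ _ _ _ _ _ ub aw vw'
  omega

lemma star_unique (S : Sys N M) {u a v b w u' a' b' w' : ℤ} (A : Star M u a v b w)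
    (B : Star M u' a' v b' w') : u = u' ∧ a = a' ∧ b = b' ∧ w = w' := by
  have h1 := S.star_le A B
  have h2 := S.star_le B A
  obtain ⟨ua, av, vb, bw, uv, ab, vw, ub, aw⟩ := A
  obtain ⟨ua', av', vb', bw', uv', ab', vw', ub', aw'⟩ := B
  have := S.nc _ _ _ _ _ _ ub' ab vw
  have := S.nc _ _ _ _ _ _ ub ab' vw'
  have := S.nc _ _ _ _ _ _ uv ab aw'
  have := S.nc _ _ _ _ _ _ uv' ab' aw
  omega

lemma star_ne (S : Sys N M) {p : ℤ} (hp : M p (p + 2 * N)) {u a b w : ℤ}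
    (A : Star M u a p b w) : False := by
  obtain ⟨ua, av, vb, bw, uv, ab, vw, ub, aw⟩ := A
  have l := S.len ub
  have := S.nc _ _ _ _ _ _ (S.per _ _ (-1) (S.per _ _ (-1) hp)) ub aw
  omega

end Sys

lemma crossingFree_three {E : Set Edge} (hE : ValidEdges E) : CrossingFree 3 E ↔
    ∀ a1 b1 a2 b2 a3 b3, (a1, b1) ∈ E → (a2, b2) ∈ E → (a3, b3) ∈ E →
    ¬ (a1 < a2 ∧ a2 < a3 ∧ a3 < b1 ∧ b1 < b2 ∧ b2 < b3) := by
  constructor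
  · intro h a1 b1 a2 b2 a3 b3 m1 m2 m3 hh
    apply h
    refine ⟨{(a1, b1), (a2, b2), (a3, b3)}, ?_, ?_, ?_⟩
    · intro x hx
      simp only [Finset.coe_insert, Finset.coe_singleton, Set.mem_insert_iff,
        Set.mem_singleton_iff] at hx
      rcases hx with rfl | rfl | rfl <;> assumption
    · rw [Finset.card_eq_three]
      refine ⟨_, _, _, ?_, ?_, ?_, rfl⟩ <;> simp only [ne_eq, Prod.mk.injEq] <;> omega
    · intro e he f hf hne
      simp only [Finset.mem_insert, Finset.mem_singleton] at he hf
      rcases he with rfl | rfl | rfl <;> rcases hf with rfl | rfl | rfl <;>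
        first
        | exact absurd rfl hne
        | (simp only [Crosses]; omega)
  · rintro h ⟨s, hs, hc, hx⟩
    obtain ⟨⟨a, b⟩, ⟨c, d⟩, ⟨e, f⟩, n1, n2, n3, rfl⟩ := Finset.card_eq_three.1 hc
    have m1 : (a, b) ∈ E := hs (by simp)
    have m2 : (c, d) ∈ E := hs (by simp)
    have m3 : (e, f) ∈ E := hs (by simp)
    have v1 := hE _ m1
    have v2 := hE _ m2
    have v3 := hE _ m3
    have x1 := hx (a, b) (by simp) (c, d) (by simp) n1
    have x2 := hx (a, b) (by simp) (e, f) (by simp) n2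
    have x3 := hx (c, d) (by simp) (e, f) (by simp) n3
    simp only [Crosses] at x1 x2 x3 v1 v2 v3
    rw [min_eq_left v1.le, max_eq_right v1.le, min_eq_left v2.le, max_eq_right v2.le] at x1
    rw [min_eq_left v1.le, max_eq_right v1.le, min_eq_left v3.le, max_eq_right v3.le] at x2
    rw [min_eq_left v2.le, max_eq_right v2.le, min_eq_left v3.le, max_eq_right v3.le] at x3
    have h1 := h _ _ _ _ _ _ m1 m2 m3
    have h2 := h _ _ _ _ _ _ m1 m3 m2
    have h3 := h _ _ _ _ _ _ m2 m1 m3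
    have h4 := h _ _ _ _ _ _ m2 m3 m1
    have h5 := h _ _ _ _ _ _ m3 m1 m2
    have h6 := h _ _ _ _ _ _ m3 m2 m1
    clear hx hs hc n1 n2 n3 h m1 m2 m3 hE
    rcases x1 with x1 | x1 <;> rcases x2 with x2 | x2 <;> rcases x3 with x3 | x3 <;>
      omega

lemma per_all {n : ℕ} {T : Set Edge} (hT : Periodic n T) (a b t : ℤ) (h : (a, b) ∈ T) :
    (a + t * n, b + t * n) ∈ T := by
  induction t using Int.induction_on with
  | zero => simpa using h
  | succ i ih =>
    have := (hT _).1 ih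
    simp only [shift] at this
    convert this using 2 <;> ring
  | pred i ih =>
    rw [hT]
    simp only [shift]
    convert ih using 2 <;> ring

lemma sys_of {n : ℕ} (hn : 1 ≤ n) {T : Set Edge} (hT : IsTriangulation n 2 T) :
    Sys (n : ℤ) (fun a b => (a, b) ∈ T) := by
  obtain ⟨hv, hp, hc, hm⟩ := hT
  refine ⟨by omega, fun a b h => hv _ h, fun a b t h => per_all hp a b t h,
    (crossingFree_three hv).1 hc, ?_⟩
  intro a b hab h
  set T' : Set Edge := {e | e ∈ T ∨ ∃ t : ℤ, e.1 = a + t * n ∧ e.2 = b + t * n} with hT'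
  have hv' : ValidEdges T' := by
    rintro e (he | ⟨t, h1, h2⟩)
    · exact hv _ he
    · omega
  have key := hm T' hv' ?_ ?_ (fun e he => Or.inl he)
  · rw [← key]
    exact Or.inr ⟨0, by simp, by simp⟩
  · intro e
    constructor
    · rintro (he | ⟨t, h1, h2⟩)
      · exact Or.inl ((hp _).1 he)
      · refine Or.inr ⟨t + 1, ?_, ?_⟩ <;> simp only [shift, h1, h2] <;> ring
    · rintro (he | ⟨t, h1, h2⟩)
      · exact Or.inl ((hp _).2 he)
      · simp only [shift] at h1 h2
        refine Or.inr ⟨t - 1, ?_, ?_⟩ <;> linarith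
  · exact (crossingFree_three hv').2 fun a1 b1 a2 b2 a3 b3 m1 m2 m3 =>
      h a1 b1 a2 b2 a3 b3 m1 m2 m3

lemma star_iff {T : Set Edge} (hv : ValidEdges T) (z : Fin 5 → ℤ) :
    z ∈ StarsIn T ↔ Sys.Star (fun a b => (a, b) ∈ T) (z 0) (z 1) (z 2) (z 3) (z 4) := by
  have key : ∀ a b : ℤ, a < b → (EdgeMem T a b ↔ (a, b) ∈ T) := by
    intro a b hab
    refine ⟨?_, Or.inl⟩
    rintro (h | h)
    · exact h
    · have := hv _ h
      simp only at this
      omega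
  have key' : ∀ a b : ℤ, a < b → (EdgeMem T b a ↔ (a, b) ∈ T) := by
    intro a b hab
    rw [← key a b hab]
    exact or_comm
  constructor
  · rintro ⟨hz, he⟩
    have h01 : z 0 < z 1 := hz (by decide)
    have h12 : z 1 < z 2 := hz (by decide)
    have h23 : z 2 < z 3 := hz (by decide)
    have h34 : z 3 < z 4 := hz (by decide)
    exact ⟨h01, h12, h23, h34, (key _ _ (by omega)).1 (he 0), (key _ _ (by omega)).1 (he 1),
      (key _ _ (by omega)).1 (he 2), (key' _ _ (by omega)).1 (he 3),
      (key' _ _ (by omega)).1 (he 4)⟩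
  · rintro ⟨ua, av, vb, bw, uv, ab, vw, ub, aw⟩
    refine ⟨?_, ?_⟩
    · rw [Fin.strictMono_iff_lt_succ]
      intro i
      fin_cases i <;> assumption
    · intro i
      fin_cases i
      · exact Or.inl uv
      · exact Or.inl ab
      · exact Or.inl vw
      · exact Or.inr ub
      · exact Or.inr aw

lemma star_shift {n : ℕ} {T : Set Edge} (hp : Periodic n T) (z : Fin 5 → ℤ)
    (hz : z ∈ StarsIn T) (t : ℤ) : (fun i => z i + t * n) ∈ StarsIn T := by
  refine ⟨fun i j hij => ?_, fun i => ?_⟩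
  · have := hz.1 hij
    simp only
    omega
  · rcases hz.2 i with h | h
    · exact Or.inl (per_all hp _ _ t h)
    · exact Or.inr (per_all hp _ _ t h)

lemma star_eq {n : ℕ} {T : Set Edge} (hv : ValidEdges T)
    (S : Sys (n : ℤ) (fun a b => (a, b) ∈ T)) {z y : Fin 5 → ℤ} (hz : z ∈ StarsIn T)
    (hy : y ∈ StarsIn T) (h : z 2 = y 2) : z = y := by
  rw [star_iff hv] at hz hy
  rw [← h] at hy
  obtain ⟨h0, h1, h3, h4⟩ := S.star_unique hz hy
  funext i
  fin_cases i <;> assumption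


/-- For an `n`-periodic 2-triangulation `T` on `ℤ`, the set of
2-stars contained in `T` is invariant under translation by `n`, and the number
of its orbits under translation by `n` is exactly `n − 1`. -/
theorem star_orbit_count (n : ℕ) (hn : 1 ≤ n)
    (T : Set Edge) (hT : IsTriangulation n 2 T) :
    (∀ z : Fin 5 → ℤ, z ∈ StarsIn T ↔ (fun i => z i + (n : ℤ)) ∈ StarsIn T) ∧
    ((starOrbit n) '' StarsIn T).ncard = n - 1 := by
  have S := sys_of hn hT
  obtain ⟨hv, hper, -, -⟩ := hT
  refine ⟨fun z => ⟨fun hz => ?_, fun hz => ?_⟩, ?_⟩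
  · simpa using star_shift hper z hz 1
  · simpa using star_shift hper _ hz (-1)
  obtain ⟨p, hp⟩ := S.exists_long
  have hN := S.pos
  have hex : ∀ v : ℤ, ∃ z : Fin 5 → ℤ, v ∈ Set.Ioo p (p + n) → z ∈ StarsIn T ∧ z 2 = v := by
    intro v
    by_cases hvm : v ∈ Set.Ioo p (p + n)
    · obtain ⟨u, a, b, w, h1, h2, h3, h4, h5, h6, h7, h8, h9⟩ := S.star_exists hp hvm.1 hvm.2
      refine ⟨![u, a, v, b, w], fun _ => ⟨?_, rfl⟩⟩
      rw [star_iff hv]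
      exact ⟨h1, h2, h3, h4, h5, h6, h7, h8, h9⟩
    · exact ⟨0, fun h => absurd h hvm⟩
  choose s hs using hex
  have himg : starOrbit n '' StarsIn T = (fun v => starOrbit n (s v)) '' Set.Ioo p (p + n) := by
    ext O
    constructor
    · rintro ⟨z, hz, rfl⟩
      have hdm := Int.mul_ediv_add_emod (z 2 - p) n
      have hm0 := Int.emod_nonneg (z 2 - p) hN.ne'
      have hm1 := Int.emod_lt_of_pos (z 2 - p) hN
      set q := (z 2 - p) / n with hq
      set r := (z 2 - p) % n with hr
      have hz' := star_shift hper z hz (-q)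
      have e2 : z 2 + -q * n = p + r := by linarith
      have hr0 : r ≠ 0 := by
        intro h0
        have hz'' := hz'
        rw [star_iff hv] at hz''
        simp only [e2, h0, add_zero] at hz''
        exact S.star_ne hp hz''
      have hmem : p + r ∈ Set.Ioo p (p + n) := ⟨by omega, by omega⟩
      refine ⟨p + r, hmem, ?_⟩
      obtain ⟨g1, g2⟩ := hs _ hmem
      have e := star_eq hv S g1 hz' (by rw [g2]; exact e2.symm)
      simp only
      rw [e]
      ext w
      constructor
      · rintro ⟨t, rfl⟩
        exact ⟨t - q, by funext i; ring⟩
      · rintro ⟨t, rfl⟩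
        exact ⟨t + q, by funext i; ring⟩
    · rintro ⟨v, hvm, rfl⟩
      exact ⟨s v, (hs v hvm).1, rfl⟩
  have hinj : Set.InjOn (fun v => starOrbit n (s v)) (Set.Ioo p (p + n)) := by
    intro v hvm v' hvm' h
    have h' : starOrbit n (s v) = starOrbit n (s v') := h
    have : s v ∈ starOrbit n (s v') := by
      rw [← h']
      exact ⟨0, by simp⟩
    obtain ⟨t, ht⟩ := this
    have e := congrFun ht 2
    rw [(hs v hvm).2, (hs v' hvm').2] at e
    obtain ⟨k1, k2⟩ := hvm
    obtain ⟨k3, k4⟩ := hvm'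
    have t1 : t < 1 := by
      by_contra hc
      nlinarith
    have t2 : -1 < t := by
      by_contra hc
      nlinarith
    have : t = 0 := by omega
    subst this
    simpa using e
  rw [himg, hinj.ncard_image, ← Finset.coe_Ioo, Set.ncard_coe_finset, Int.card_Ioo]
  omega

end Multitriangulation
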